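/- arXiv:1504.02598 — 2 statements merged into one kernel-verified Lean document; each statement's English description precedes it below -/
import Mathlib

section
/- Let n and q be integers with n ≥ 2 and q ≥ 2. Then Φ*_n(q) equals the largest divisor of Φ_n(q) that is coprime to ∏_{k | n, k < n} Φ_k(q), the product being over the proper divisors k of n. -/
/-- `Phi n q` is the `n`-th cyclotomic polynomial evaluated at `q`. -/
noncomputable def Phi (n q : ℕ) : ℕ :=
  ((Polynomial.cyclotomic n ℤ).eval (q : ℤ)).toNat

/-- `PhiStar n q` is the largest divisor of `Phi n q` that is coprime to
`∏_{k=1}^{n-1} (q^k - 1)` (an empty product is `1`). -/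
noncomputable def PhiStar (n q : ℕ) : ℕ :=
  sSup {m : ℕ | m ∣ Phi n q ∧ Nat.Coprime m (∏ k ∈ Finset.Ico 1 n, (q ^ k - 1))}

/-!
If `m ∣ q ^ n - 1`, then `gcd m (q ^ k - 1) = gcd m (q ^ gcd n k - 1)`, so coprimality of `m` to
`q ^ k - 1` for all `0 < k < n` only has to be tested at the proper divisors of `n`. There the
factorization `q ^ k - 1 = ∏ d ∣ k, Φ_d(q)` turns it into coprimality to the values `Φ_d(q)`.
This applies to every divisor `m` of `Φ_n(q)`, since `Φ_n(q) ∣ q ^ n - 1`.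
-/

theorem gcd_pow_sub_one_eq_gcd_pow_gcd_sub_one {m q n : ℕ} (hm : m ∣ q ^ n - 1) (k : ℕ) :
    m.gcd (q ^ k - 1) = m.gcd (q ^ n.gcd k - 1) := by
  rw [← Nat.pow_sub_one_gcd_pow_sub_one, ← Nat.gcd_assoc, Nat.gcd_eq_left hm]

theorem gcd_mem_properDivisors_of_mem_Ico {n k : ℕ} (hk : k ∈ Finset.Ico 1 n) :
    n.gcd k ∈ n.properDivisors := by
  obtain ⟨hk_pos, hk_lt⟩ := Finset.mem_Ico.mp hk
  exact Nat.mem_properDivisors.mpr ⟨n.gcd_dvd_left k, (Nat.gcd_le_right n hk_pos).trans_lt hk_lt⟩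

theorem coprime_prod_Ico_pow_sub_one_iff {m q n : ℕ} (hm : m ∣ q ^ n - 1) :
    m.Coprime (∏ k ∈ Finset.Ico 1 n, (q ^ k - 1)) ↔
      m.Coprime (∏ k ∈ n.properDivisors, (q ^ k - 1)) := by
  simp only [Nat.coprime_prod_right_iff]
  constructor
  · intro h k hk
    exact h k (Finset.mem_Ico.mpr
      ⟨Nat.pos_of_mem_properDivisors hk, (Nat.mem_properDivisors.mp hk).2⟩)
  · intro h k hk
    rw [Nat.Coprime, gcd_pow_sub_one_eq_gcd_pow_gcd_sub_one hm]
    exact h _ (gcd_mem_properDivisors_of_mem_Ico hk)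

theorem natCast_phi (n : ℕ) {q : ℕ} (hq : 1 ≤ q) :
    (Phi n q : ℤ) = (Polynomial.cyclotomic n ℤ).eval (q : ℤ) :=
  Int.toNat_of_nonneg (Polynomial.cyclotomic_nonneg n (by exact_mod_cast hq))

theorem prod_divisors_phi {n q : ℕ} (hn : 0 < n) (hq : 1 ≤ q) :
    ∏ d ∈ n.divisors, Phi d q = q ^ n - 1 := by
  zify [Nat.one_le_pow n q hq]
  simp [natCast_phi _ hq, ← Polynomial.eval_prod,
    Polynomial.prod_cyclotomic_eq_X_pow_sub_one hn]

theorem phi_dvd_pow_sub_one (n : ℕ) {q : ℕ} (hq : 1 ≤ q) : Phi n q ∣ q ^ n - 1 := by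
  zify [Nat.one_le_pow n q hq]
  simpa [natCast_phi n hq] using
    Polynomial.eval_dvd (x := (q : ℤ)) (Polynomial.cyclotomic.dvd_X_pow_sub_one n ℤ)

theorem coprime_prod_properDivisors_pow_sub_one_iff {q : ℕ} (m n : ℕ) (hq : 1 ≤ q) :
    m.Coprime (∏ k ∈ n.properDivisors, (q ^ k - 1)) ↔
      m.Coprime (∏ d ∈ n.properDivisors, Phi d q) := by
  simp only [Nat.coprime_prod_right_iff]
  constructor
  · intro h d hd
    exact (h d hd).coprime_dvd_right (phi_dvd_pow_sub_one d hq)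
  · intro h k hk
    rw [← prod_divisors_phi (Nat.pos_of_mem_properDivisors hk) hq, Nat.coprime_prod_right_iff]
    obtain ⟨hkn, hk_lt⟩ := Nat.mem_properDivisors.mp hk
    have hdivisors : k.divisors ⊆ n.properDivisors :=
      Nat.divisors_subset_properDivisors (Nat.ne_zero_of_lt hk_lt) hkn hk_lt.ne
    exact fun d hd ↦ h d (hdivisors hd)

/-- Lemma 4(a): `Φ*_n(q)` equals the largest divisor of `Φ_n(q)` coprime to
`∏_{k ∣ n, k < n} Φ_k(q)`. -/
theorem phiStar_eq_sSup_properDivisors (n q : ℕ) (hn : 2 ≤ n) (hq : 2 ≤ q) :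
    PhiStar n q =
      sSup {m : ℕ | m ∣ Phi n q ∧
        Nat.Coprime m (∏ k ∈ Nat.properDivisors n, Phi k q)} := by
  have hq_pos : 1 ≤ q := one_le_two.trans hq
  refine congrArg sSup (Set.ext fun m ↦ and_congr_right fun hm ↦ ?_)
  rw [coprime_prod_Ico_pow_sub_one_iff (hm.trans (phi_dvd_pow_sub_one n hq_pos)),
    coprime_prod_properDivisors_pow_sub_one_iff m n hq_pos]
end

section
/- For all real constants c > 0 and k > 0, the set of pairs of integers (n, q) with n ≥ 3, q ≥ 2 and Φ_n(q) ≤ c·n^k is finite. -/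
/-!
Möbius inversion of `∏_{d ∣ n} Φ_d(q) = q ^ n - 1` gives
`Φ_n(q) = q ^ φ(n) * ∏_{d ∣ n} (1 - q⁻ᵈ) ^ μ(n / d)`. Every factor is at least `1 - q⁻ᵈ`, so the
product is at least `1 - q⁻¹ - q⁻²`, and `q ^ φ(n) ≤ 4 Φ_n(q)` for `q ≥ 2`. As `n ≤ 2 φ(n) ^ 2`,
the exponential `2 ^ φ(n)` outgrows every power of `n`: this bounds `n`, and then
`q ≤ q ^ φ(n) ≤ 4 Φ_n(q)` bounds `q`.
-/

open Filter Asymptotics Polynomial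
open scoped ArithmeticFunction.Moebius Nat

section Totient

theorem le_totient_sq_of_odd {n : ℕ} (hn : Odd n) : n ≤ φ n ^ 2 := by
  induction n using Nat.recOnPosPrimePosCoprime with
  | zero => simp
  | one => simp
  | prime_pow p k hp hk =>
    obtain ⟨j, rfl⟩ := Nat.exists_eq_add_one.2 hk
    have hp_odd : Odd p := (Nat.odd_pow_iff hk.ne').1 hn
    have hp_le : p ≤ (p - 1) ^ 2 := by
      obtain ⟨r, rfl⟩ := Nat.exists_eq_add_one.2 hp.pos
      have hr : 2 ≤ r := by have := hp.two_le; grind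
      simp only [Nat.add_sub_cancel]
      nlinarith
    calc p ^ (j + 1) = p ^ j * p := pow_succ p j
      _ ≤ (p ^ j) ^ 2 * (p - 1) ^ 2 := Nat.mul_le_mul (Nat.le_self_pow two_ne_zero _) hp_le
      _ = φ (p ^ (j + 1)) ^ 2 := by rw [Nat.totient_prime_pow_succ hp, mul_pow]
  | coprime a b _ _ hab iha ihb =>
    obtain ⟨ha, hb⟩ := Nat.odd_mul.1 hn
    rw [Nat.totient_mul hab, mul_pow]
    exact Nat.mul_le_mul (iha ha) (ihb hb)

theorem two_pow_le_two_mul_totient_sq (a : ℕ) : 2 ^ a ≤ 2 * φ (2 ^ a) ^ 2 := by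
  cases a with
  | zero => simp
  | succ j =>
    rw [Nat.totient_prime_pow_succ Nat.prime_two, Nat.add_one_sub_one, mul_one, pow_succ']
    exact Nat.mul_le_mul_left 2 (Nat.le_self_pow two_ne_zero _)

theorem le_two_mul_totient_sq (n : ℕ) : n ≤ 2 * φ n ^ 2 := by
  obtain rfl | hn := eq_or_ne n 0
  · simp
  obtain ⟨a, m, hm, rfl⟩ := Nat.exists_eq_two_pow_mul_odd hn
  calc 2 ^ a * m ≤ 2 * φ (2 ^ a) ^ 2 * φ m ^ 2 :=
        Nat.mul_le_mul (two_pow_le_two_mul_totient_sq a) (le_totient_sq_of_odd hm)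
    _ = 2 * φ (2 ^ a * m) ^ 2 := by
      rw [Nat.totient_mul (Nat.Coprime.pow_left a (Nat.coprime_two_left.2 hm))]
      ring

theorem tendsto_totient_atTop : Tendsto φ atTop atTop := by
  refine tendsto_atTop.2 fun b ↦ ?_
  filter_upwards [eventually_gt_atTop (2 * b ^ 2)] with n hn
  by_contra! hb
  have := le_two_mul_totient_sq n
  have : φ n ^ 2 ≤ b ^ 2 := by gcongr
  lia

theorem isLittleO_pow_const_const_pow_totient (m : ℕ) {r : ℝ} (hr : 1 < r) :
    (fun n : ℕ ↦ (n : ℝ) ^ m) =o[atTop] fun n ↦ r ^ φ n := by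
  have hO : (fun n : ℕ ↦ (n : ℝ)) =O[atTop] fun n ↦ (φ n : ℝ) ^ 2 := by
    refine IsBigO.of_bound 2 (Eventually.of_forall fun n ↦ ?_)
    simp only [norm_pow, Real.norm_natCast]
    exact_mod_cast le_two_mul_totient_sq n
  have ho : (fun n : ℕ ↦ (φ n : ℝ) ^ (2 * m)) =o[atTop] fun n ↦ r ^ φ n :=
    (isLittleO_pow_const_const_pow_of_one_lt (2 * m) hr).comp_tendsto tendsto_totient_atTop
  refine (hO.pow m).trans_isLittleO ?_
  simpa only [← pow_mul] using ho

theorem isLittleO_rpow_const_const_pow_totient (k : ℝ) {r : ℝ} (hr : 1 < r) :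
    (fun n : ℕ ↦ (n : ℝ) ^ k) =o[atTop] fun n ↦ r ^ φ n := by
  refine IsBigO.trans_isLittleO (IsBigO.of_norm_eventuallyLE ?_)
    (isLittleO_pow_const_const_pow_totient ⌈k⌉₊ hr)
  filter_upwards [eventually_ge_atTop 1] with n hn
  rw [Real.norm_of_nonneg (by positivity), ← Real.rpow_natCast]
  exact Real.rpow_le_rpow_of_exponent_le (by exact_mod_cast hn) (Nat.le_ceil k)

end Totient

section ProdOneSubPow

variable {R : Type*} [CommRing R] [LinearOrder R] [IsStrictOrderedRing R] {x : R}

-- The summand `x ^ (n + 2)` makes the induction go through.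
theorem one_sub_sub_sq_add_pow_le_prod_one_sub_pow (hx₀ : 0 ≤ x) (hx₁ : x ≤ 1) (n : ℕ) :
    1 - x - x ^ 2 + x ^ (n + 2) ≤ ∏ d ∈ Finset.Icc 1 (n + 1), (1 - x ^ d) := by
  induction n with
  | zero => simp
  | succ n ih =>
    rw [Finset.prod_Icc_succ_top (by lia)]
    set y := x ^ (n + 2)
    have hy₀ : 0 ≤ y := pow_nonneg hx₀ _
    have hy₁ : y ≤ 1 := pow_le_one₀ hx₀ hx₁
    have hyx : y ≤ x ^ 2 := pow_le_pow_of_le_one hx₀ hx₁ (by lia)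
    calc 1 - x - x ^ 2 + x ^ (n + 1 + 2) = 1 - x - x ^ 2 + y * x := by rw [← pow_succ]
      _ ≤ (1 - x - x ^ 2 + y) * (1 - y) := by
        linear_combination mul_nonneg hy₀ (sub_nonneg.2 hyx)
      _ ≤ _ := mul_le_mul_of_nonneg_right ih (sub_nonneg.2 hy₁)

theorem one_sub_sub_sq_le_prod_divisors_one_sub_pow (hx₀ : 0 ≤ x) (hx₁ : x ≤ 1) (n : ℕ) :
    1 - x - x ^ 2 ≤ ∏ d ∈ n.divisors, (1 - x ^ d) := by
  have hsub : n.divisors ⊆ Finset.Icc 1 (n + 1) := fun d hd ↦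
    Finset.mem_Icc.2 ⟨Nat.pos_of_mem_divisors hd, (Nat.divisor_le hd).trans n.le_succ⟩
  calc 1 - x - x ^ 2 ≤ 1 - x - x ^ 2 + x ^ (n + 2) := le_add_of_nonneg_right (pow_nonneg hx₀ _)
    _ ≤ ∏ d ∈ Finset.Icc 1 (n + 1), (1 - x ^ d) :=
      one_sub_sub_sq_add_pow_le_prod_one_sub_pow hx₀ hx₁ n
    _ ≤ ∏ d ∈ n.divisors, (1 - x ^ d) :=
      Finset.prod_le_prod_of_subset_of_le_one hsub
        (fun d _ ↦ sub_nonneg.2 (pow_le_one₀ hx₀ hx₁))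
        (fun d _ _ ↦ sub_le_self 1 (pow_nonneg hx₀ d))

end ProdOneSubPow

section CyclotomicEval

variable {K : Type*} [Field K] [LinearOrder K] [IsStrictOrderedRing K] {n : ℕ} {q : K}

theorem prod_divisors_cyclotomic_eval_div_pow_totient (hn : 0 < n) (hq : q ≠ 0) :
    ∏ d ∈ n.divisors, (cyclotomic d K).eval q / q ^ φ d = 1 - q⁻¹ ^ n := by
  rw [Finset.prod_div_distrib, ← eval_prod, prod_cyclotomic_eq_X_pow_sub_one hn,
    Finset.prod_pow_eq_pow_sum, Nat.sum_totient, eval_sub, eval_pow, eval_X, eval_one,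
    sub_div, div_self (pow_ne_zero n hq), one_div, inv_pow]

theorem cyclotomic_eval_div_pow_totient_eq_prod_moebius (hn : 0 < n) (hq : 1 < q) :
    (cyclotomic n K).eval q / q ^ φ n =
      ∏ x ∈ n.divisorsAntidiagonal, (1 - q⁻¹ ^ x.2) ^ μ x.1 := by
  have hq₀ : 0 < q := one_pos.trans hq
  have hcyc (d : ℕ) (_ : 0 < d) : (cyclotomic d K).eval q / q ^ φ d ≠ 0 :=
    (div_pos (cyclotomic_pos' d hq) (pow_pos hq₀ _)).ne'
  have hone_sub (d : ℕ) (hd : 0 < d) : 1 - q⁻¹ ^ d ≠ 0 :=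
    (sub_pos.2 (pow_lt_one₀ (inv_nonneg.2 hq₀.le) (inv_lt_one_of_one_lt₀ hq) hd.ne')).ne'
  exact ((ArithmeticFunction.prod_eq_iff_prod_pow_moebius_eq_of_nonzero hcyc hone_sub).1
    (fun _ hm ↦ prod_divisors_cyclotomic_eval_div_pow_totient hm hq₀.ne') n hn).symm

theorem one_sub_inv_sub_inv_sq_mul_pow_totient_le_cyclotomic_eval (hn : 0 < n) (hq : 1 < q) :
    (1 - q⁻¹ - q⁻¹ ^ 2) * q ^ φ n ≤ (cyclotomic n K).eval q := by
  have hq₀ : 0 < q := one_pos.trans hq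
  have hx₀ : 0 < q⁻¹ := inv_pos.2 hq₀
  have hx₁ : q⁻¹ < 1 := inv_lt_one_of_one_lt₀ hq
  rw [← le_div_iff₀ (pow_pos hq₀ _), cyclotomic_eval_div_pow_totient_eq_prod_moebius hn hq]
  calc 1 - q⁻¹ - q⁻¹ ^ 2 ≤ ∏ d ∈ n.divisors, (1 - q⁻¹ ^ d) :=
        one_sub_sub_sq_le_prod_divisors_one_sub_pow hx₀.le hx₁.le n
    _ = ∏ x ∈ n.divisorsAntidiagonal, (1 - q⁻¹ ^ x.2) :=
      (Nat.prod_divisorsAntidiagonal' fun _ d ↦ 1 - q⁻¹ ^ d).symm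
    _ ≤ ∏ x ∈ n.divisorsAntidiagonal, (1 - q⁻¹ ^ x.2) ^ μ x.1 := by
      refine Finset.prod_le_prod (fun _ _ ↦ sub_nonneg.2 (pow_le_one₀ hx₀.le hx₁.le))
        fun x hx ↦ ?_
      have hx₂ : x.2 ≠ 0 := (Nat.ne_zero_of_mem_divisorsAntidiagonal hx).2
      have hpos : 0 < 1 - q⁻¹ ^ x.2 := sub_pos.2 (pow_lt_one₀ hx₀.le hx₁ hx₂)
      have hle : 1 - q⁻¹ ^ x.2 ≤ 1 := sub_le_self 1 (pow_nonneg hx₀.le _)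
      have hμ : μ x.1 ≤ 1 := (le_abs_self _).trans ArithmeticFunction.abs_moebius_le_one
      simpa only [zpow_one] using zpow_le_zpow_right_of_le_one₀ hpos hle hμ

theorem pow_totient_le_four_mul_cyclotomic_eval (hn : 0 < n) (hq : 2 ≤ q) :
    q ^ φ n ≤ 4 * (cyclotomic n K).eval q := by
  have hx₀ : 0 ≤ q⁻¹ := by positivity
  have hx : q⁻¹ ≤ 2⁻¹ := inv_anti₀ two_pos hq
  have hquarter : 1 ≤ 4 * (1 - q⁻¹ - q⁻¹ ^ 2) := by nlinarith
  calc q ^ φ n ≤ 4 * (1 - q⁻¹ - q⁻¹ ^ 2) * q ^ φ n :=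
        le_mul_of_one_le_left (by positivity) hquarter
    _ = 4 * ((1 - q⁻¹ - q⁻¹ ^ 2) * q ^ φ n) := mul_assoc _ _ _
    _ ≤ 4 * (cyclotomic n K).eval q := by
      gcongr
      exact one_sub_inv_sub_inv_sq_mul_pow_totient_le_cyclotomic_eval hn (by linarith)

end CyclotomicEval

theorem cast_Phi (R : Type*) [Ring R] (n : ℕ) {q : ℕ} (hq : 1 ≤ q) :
    (Phi n q : R) = (cyclotomic n R).eval (q : R) := by
  have hnonneg : 0 ≤ (cyclotomic n ℤ).eval (q : ℤ) := cyclotomic_nonneg n (by exact_mod_cast hq)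
  calc (Phi n q : R) = ((Phi n q : ℤ) : R) := (Int.cast_natCast _).symm
    _ = (((cyclotomic n ℤ).eval (q : ℤ) : ℤ) : R) := by rw [Phi, Int.toNat_of_nonneg hnonneg]
    _ = (cyclotomic n R).eval (q : R) := by
      rw [← map_cyclotomic_int n R, ← Int.cast_natCast (R := R) q, eval_intCast_map, eq_intCast,
        Int.cast_id]

theorem pow_totient_le_four_mul_Phi {n q : ℕ} (hn : 0 < n) (hq : 2 ≤ q) :
    q ^ φ n ≤ 4 * Phi n q := by
  have h := pow_totient_le_four_mul_cyclotomic_eval (K := ℚ) (q := q) hn (by exact_mod_cast hq)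
  rw [← cast_Phi ℚ n (one_le_two.trans hq)] at h
  exact_mod_cast h

theorem finite_phi_le_general {f : ℕ → ℝ} (hf : f =o[atTop] fun n ↦ (2 : ℝ) ^ φ n) :
    {nq : ℕ × ℕ | 0 < nq.1 ∧ 2 ≤ nq.2 ∧ (Phi nq.1 nq.2 : ℝ) ≤ f nq.1}.Finite := by
  obtain ⟨N, hN⟩ := eventually_atTop.1 (hf.def (c := 1 / 5) (by norm_num))
  have hfinite : (⋃ n ∈ Set.Iio N, {n} ×ˢ Set.Iic ⌊4 * f n⌋₊).Finite :=
    (Set.finite_Iio N).biUnion fun n _ ↦ (Set.finite_singleton n).prod (Set.finite_Iic _)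
  refine hfinite.subset ?_
  rintro ⟨n, q⟩ ⟨hn, hq, hle⟩
  have hpow : (q : ℝ) ^ φ n ≤ 4 * f n := calc
    (q : ℝ) ^ φ n ≤ 4 * Phi n q := by exact_mod_cast pow_totient_le_four_mul_Phi hn hq
    _ ≤ 4 * f n := by gcongr
  have hnN : n < N := by
    by_contra! hNn
    have hsmall : f n ≤ 1 / 5 * 2 ^ φ n := by
      simpa using (Real.le_norm_self _).trans (hN n hNn)
    have hbase : (2 : ℝ) ^ φ n ≤ (q : ℝ) ^ φ n := by gcongr; exact_mod_cast hq
    have : (0 : ℝ) < 2 ^ φ n := by positivity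
    linarith
  have hqle : q ≤ ⌊4 * f n⌋₊ := by
    refine Nat.le_floor (le_trans ?_ hpow)
    exact_mod_cast Nat.le_self_pow (Nat.totient_pos.2 hn).ne' q
  simp [hnN, hqle]

/-- For all constants `c, k > 0`, the set of pairs `(n, q)` of integers with
`n ≥ 3`, `q ≥ 2` and `Φ_n(q) ≤ c·n^k` is finite. -/
theorem finite_phi_le (c k : ℝ) (hc : 0 < c) (hk : 0 < k) :
    {nq : ℕ × ℕ | 3 ≤ nq.1 ∧ 2 ≤ nq.2 ∧
      (Phi nq.1 nq.2 : ℝ) ≤ c * (nq.1 : ℝ) ^ k}.Finite :=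
  (finite_phi_le_general <|
    (isLittleO_rpow_const_const_pow_totient k one_lt_two).const_mul_left c).subset
      fun _ ⟨hn, hq, hle⟩ ↦ ⟨three_pos.trans_le hn, hq, hle⟩
end
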